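/- Let I be an S5-interpretation, (w_0,d_0) ∈ W^I × Δ^I, ℓ ≥ 0, and let J be the partial unravelling of I at d_0 up to level ℓ, obtained by restricting the tree unravelling I*_{d_0} to the radius-(ℓ+1) Gaifman neighbourhood of the root d_0 and identifying each path d̄ at distance ℓ+1 from the root with the element π(d̄) in a fresh disjoint copy of I. Then J,w_0,d_0 ≈ I,w_0,d_0, where a bisimulation is given by the map ρ sending each surviving path to its last entry and each element of the copy of I to itself (with identity on worlds); moreover, J is finite whenever I is finite. -/

import Mathlib

/-! Core definitions: S5-interpretations, S5^loc_ALC concepts, S5_FOL formulas,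
    bisimulations, games, Gaifman locality, unravellings, normal forms,
    and the two-sorted correspondence language. -/

/-- An S5-interpretation: nonempty sets of worlds and individuals, and for each
world an ALC interpretation of concept and role names. -/
structure S5Interp (NC NR : Type) : Type 1 where
  W : Type
  Δ : Type
  W_nonempty : Nonempty W
  Δ_nonempty : Nonempty Δ
  conc : NC → W → Set Δ
  role : NR → W → Set (Δ × Δ)

variable {NC NR : Type}

/-- Concepts of S5^loc_ALC : C ::= A | ¬C | C ⊓ D | ∃r.C | □C. -/
inductive DLConcept (NC NR : Type) : Type where
  | atom : NC → DLConcept NC NR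
  | neg  : DLConcept NC NR → DLConcept NC NR
  | and  : DLConcept NC NR → DLConcept NC NR → DLConcept NC NR
  | ex   : NR → DLConcept NC NR → DLConcept NC NR
  | box  : DLConcept NC NR → DLConcept NC NR

/-- ◇C := ¬□¬C. -/
def DLConcept.dia (C : DLConcept NC NR) : DLConcept NC NR := .neg (.box (.neg C))

/-- Satisfaction I,w,d ⊨ C. -/
def DLConcept.Sat (I : S5Interp NC NR) : I.W → I.Δ → DLConcept NC NR → Prop
  | w, d, .atom A  => d ∈ I.conc A w
  | w, d, .neg C   => ¬ DLConcept.Sat I w d C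
  | w, d, .and C D => DLConcept.Sat I w d C ∧ DLConcept.Sat I w d D
  | w, d, .ex r C  => ∃ e, (d, e) ∈ I.role r w ∧ DLConcept.Sat I w e C
  | _, d, .box C   => ∀ v, DLConcept.Sat I v d C

/-- Rank of a concept: maximal nesting depth of □ and ∃r. -/
def DLConcept.rank : DLConcept NC NR → ℕ
  | .atom _  => 0
  | .neg C   => C.rank
  | .and C D => max C.rank D.rank
  | .ex _ C  => C.rank + 1
  | .box C   => C.rank + 1

/-- Formulas of S5-modalized first-order logic over the correspondence
language (variables are natural numbers). -/
inductive FOForm (NC NR : Type) : Type where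
  | conc : NC → ℕ → FOForm NC NR
  | role : NR → ℕ → ℕ → FOForm NC NR
  | eq   : ℕ → ℕ → FOForm NC NR
  | neg  : FOForm NC NR → FOForm NC NR
  | and  : FOForm NC NR → FOForm NC NR → FOForm NC NR
  | ex   : ℕ → FOForm NC NR → FOForm NC NR
  | box  : FOForm NC NR → FOForm NC NR

/-- Satisfaction I,w,η ⊨ φ for S5_FOL. -/
def FOForm.Sat (I : S5Interp NC NR) : I.W → (ℕ → I.Δ) → FOForm NC NR → Prop
  | w, η, .conc A x   => η x ∈ I.conc A w
  | w, η, .role r x y => (η x, η y) ∈ I.role r w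
  | _, η, .eq x y     => η x = η y
  | w, η, .neg φ      => ¬ FOForm.Sat I w η φ
  | w, η, .and φ ψ    => FOForm.Sat I w η φ ∧ FOForm.Sat I w η ψ
  | w, η, .ex x φ     => ∃ d, FOForm.Sat I w (Function.update η x d) φ
  | _, η, .box φ      => ∀ v, FOForm.Sat I v η φ

/-- Rank of a formula: maximal nesting depth of □ and ∃. -/
def FOForm.rank : FOForm NC NR → ℕ
  | .conc _ _   => 0
  | .role _ _ _ => 0
  | .eq _ _     => 0
  | .neg φ      => φ.rank
  | .and φ ψ    => max φ.rank ψ.rank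
  | .ex _ φ     => φ.rank + 1
  | .box φ      => φ.rank + 1

/-- Free variables of a formula. -/
def FOForm.freeVars : FOForm NC NR → Set ℕ
  | .conc _ x   => {x}
  | .role _ x y => {x, y}
  | .eq x y     => {x, y}
  | .neg φ      => φ.freeVars
  | .and φ ψ    => φ.freeVars ∪ ψ.freeVars
  | .ex x φ     => φ.freeVars \ {x}
  | .box φ      => φ.freeVars

/-- The standard translation ST_x, using x+1 as the fresh variable for
existential restrictions. -/
def standardTranslation : ℕ → DLConcept NC NR → FOForm NC NR
  | x, .atom A  => .conc A x
  | x, .neg C   => .neg (standardTranslation x C)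
  | x, .and C D => .and (standardTranslation x C) (standardTranslation x D)
  | x, .ex r C  => .ex (x+1) (.and (.role r x (x+1)) (standardTranslation (x+1) C))
  | x, .box C   => .box (standardTranslation x C)

/-- Bisimulations between S5-interpretations. -/
def IsBisimulation (I J : S5Interp NC NR)
    (R : (I.W × I.Δ) → (J.W × J.Δ) → Prop) : Prop :=
  ∀ w d v e, R (w, d) (v, e) →
    (∀ A : NC, d ∈ I.conc A w ↔ e ∈ J.conc A v) ∧
    (∀ w', ∃ v', R (w', d) (v', e)) ∧
    (∀ v', ∃ w', R (w', d) (v', e)) ∧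
    (∀ (r : NR) d', (d, d') ∈ I.role r w → ∃ e', (e, e') ∈ J.role r v ∧ R (w, d') (v, e')) ∧
    (∀ (r : NR) e', (e, e') ∈ J.role r v → ∃ d', (d, d') ∈ I.role r w ∧ R (w, d') (v, e'))

/-- I,w,d ≈ J,v,e : some bisimulation relates (w,d) and (v,e). -/
def Bisimilar (I J : S5Interp NC NR) (w : I.W) (d : I.Δ) (v : J.W) (e : J.Δ) : Prop :=
  ∃ R, IsBisimulation I J R ∧ R (w, d) (v, e)

/-- Depth-n bisimilarity ≈ₙ (Duplicator wins the n-round bisimulation game). -/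
def BisimAtDepth (I J : S5Interp NC NR) : ℕ → I.W → I.Δ → J.W → J.Δ → Prop
  | 0, w, d, v, e => ∀ A : NC, d ∈ I.conc A w ↔ e ∈ J.conc A v
  | n+1, w, d, v, e =>
      (∀ A : NC, d ∈ I.conc A w ↔ e ∈ J.conc A v) ∧
      (∀ w', ∃ v', BisimAtDepth I J n w' d v' e) ∧
      (∀ v', ∃ w', BisimAtDepth I J n w' d v' e) ∧
      (∀ (r : NR) d', (d, d') ∈ I.role r w →
        ∃ e', (e, e') ∈ J.role r v ∧ BisimAtDepth I J n w d' v e') ∧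
      (∀ (r : NR) e', (e, e') ∈ J.role r v →
        ∃ d', (d, d') ∈ I.role r w ∧ BisimAtDepth I J n w d' v e')

/-- Atomic agreement of two configurations. -/
def AltAtom (I J : S5Interp NC NR) (w : I.W) (d : I.Δ) (v : J.W) (e : J.Δ) : Prop :=
  ∀ A : NC, d ∈ I.conc A w ↔ e ∈ J.conc A v

/-- One pair of Δ-moves (in either interpretation), continuing with `P`. -/
def AltDelta (I J : S5Interp NC NR) (P : I.W → I.Δ → J.W → J.Δ → Prop)
    (w : I.W) (d : I.Δ) (v : J.W) (e : J.Δ) : Prop :=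
  (∀ (r : NR) d', (d, d') ∈ I.role r w → ∃ e', (e, e') ∈ J.role r v ∧ P w d' v e') ∧
  (∀ (r : NR) e', (e, e') ∈ J.role r v → ∃ d', (d, d') ∈ I.role r w ∧ P w d' v e')

/-- Duplicator wins the n-round alternating bisimulation game (each round:
an optional pair of W-moves followed by a mandatory pair of Δ-moves; one extra
optional pair of W-moves may be played at the very end). -/
def AltBisim (I J : S5Interp NC NR) : ℕ → I.W → I.Δ → J.W → J.Δ → Prop
  | 0, w, d, v, e =>
      AltAtom I J w d v e ∧
      (∀ w', ∃ v', AltAtom I J w' d v' e) ∧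
      (∀ v', ∃ w', AltAtom I J w' d v' e)
  | n+1, w, d, v, e =>
      AltAtom I J w d v e ∧
      AltDelta I J (AltBisim I J n) w d v e ∧
      (∀ w', ∃ v', AltAtom I J w' d v' e ∧ AltDelta I J (AltBisim I J n) w' d v' e) ∧
      (∀ v', ∃ w', AltAtom I J w' d v' e ∧ AltDelta I J (AltBisim I J n) w' d v' e)

/-- Winning strategies in the unbounded alternating bisimulation game,
presented as relations closed under the game conditions. -/
def IsAltBisimulation (I J : S5Interp NC NR)
    (R : (I.W × I.Δ) → (J.W × J.Δ) → Prop) : Prop :=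
  ∀ w d v e, R (w, d) (v, e) →
    AltAtom I J w d v e ∧
    AltDelta I J (fun w' d' v' e' => R (w', d') (v', e')) w d v e ∧
    (∀ w', ∃ v', AltAtom I J w' d v' e ∧
      AltDelta I J (fun a b c f => R (a, b) (c, f)) w' d v' e) ∧
    (∀ v', ∃ w', AltAtom I J w' d v' e ∧
      AltDelta I J (fun a b c f => R (a, b) (c, f)) w' d v' e)

/-- I,w,d ≈^alt J,v,e : Duplicator wins the unbounded alternating game. -/
def AltBisimilar (I J : S5Interp NC NR) (w : I.W) (d : I.Δ) (v : J.W) (e : J.Δ) : Prop :=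
  ∃ R, IsAltBisimulation I J R ∧ R (w, d) (v, e)

/-- Partial isomorphism between configurations of the S5-Ehrenfeucht–Fraïssé game. -/
def PartialIso (I J : S5Interp NC NR) {k : ℕ} (w : I.W) (v : J.W)
    (ds : Fin k → I.Δ) (es : Fin k → J.Δ) : Prop :=
  (∀ i j, ds i = ds j ↔ es i = es j) ∧
  (∀ (A : NC) i, ds i ∈ I.conc A w ↔ es i ∈ J.conc A v) ∧
  (∀ (r : NR) i j, (ds i, ds j) ∈ I.role r w ↔ (es i, es j) ∈ J.role r v)

/-- S5-Ehrenfeucht–Fraïssé equivalence up to depth n (Duplicator wins the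
n-round EF game). -/
def EFEquiv (I J : S5Interp NC NR) :
    ℕ → (k : ℕ) → I.W → (Fin k → I.Δ) → J.W → (Fin k → J.Δ) → Prop
  | 0, _, w, ds, v, es => PartialIso I J w v ds es
  | n+1, k, w, ds, v, es =>
      PartialIso I J w v ds es ∧
      (∀ w', ∃ v', EFEquiv I J n k w' ds v' es) ∧
      (∀ v', ∃ w', EFEquiv I J n k w' ds v' es) ∧
      (∀ d, ∃ e, EFEquiv I J n (k+1) w (Fin.snoc ds d) v (Fin.snoc es e)) ∧
      (∀ e, ∃ d, EFEquiv I J n (k+1) w (Fin.snoc ds d) v (Fin.snoc es e))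

/-- Adjacency in the Gaifman graph of an S5-interpretation. -/
def GaifmanAdj (I : S5Interp NC NR) (d e : I.Δ) : Prop :=
  d ≠ e ∧ ∃ (r : NR) (w : I.W), (d, e) ∈ I.role r w ∨ (e, d) ∈ I.role r w

/-- The radius-ℓ neighbourhood U^ℓ(d) of d in the Gaifman graph
(the set of elements at Gaifman distance at most ℓ from d). -/
def GaifmanBall (I : S5Interp NC NR) (d : I.Δ) : ℕ → Set I.Δ
  | 0 => {d}
  | ℓ+1 => GaifmanBall I d ℓ ∪ {e | ∃ e' ∈ GaifmanBall I d ℓ, GaifmanAdj I e' e}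

lemma mem_gaifmanBall_self (I : S5Interp NC NR) (d : I.Δ) (ℓ : ℕ) :
    d ∈ GaifmanBall I d ℓ := by
  induction ℓ with
  | zero => simp [GaifmanBall]
  | succ n ih => exact Set.mem_union_left _ ih

/-- Restriction I|_U of an S5-interpretation to a nonempty subset U of its domain. -/
def S5Interp.restrict (I : S5Interp NC NR) (U : Set I.Δ) (hU : U.Nonempty) :
    S5Interp NC NR where
  W := I.W
  Δ := ↥U
  W_nonempty := I.W_nonempty
  Δ_nonempty := hU.to_subtype
  conc A w := {x | (x : I.Δ) ∈ I.conc A w}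
  role r w := {p | ((p.1 : I.Δ), (p.2 : I.Δ)) ∈ I.role r w}

/-- Restriction I|_{U^ℓ(d)} to the radius-ℓ Gaifman neighbourhood of d. -/
def S5Interp.ballRestrict (I : S5Interp NC NR) (d : I.Δ) (ℓ : ℕ) : S5Interp NC NR :=
  I.restrict (GaifmanBall I d ℓ) ⟨d, mem_gaifmanBall_self I d ℓ⟩

/-- The point d viewed inside I|_{U^ℓ(d)}. -/
def S5Interp.ballPt (I : S5Interp NC NR) (d : I.Δ) (ℓ : ℕ) : (I.ballRestrict d ℓ).Δ :=
  ⟨d, mem_gaifmanBall_self I d ℓ⟩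

/-- A formula φ with (single) free variable x is ℓ-local if its truth at d only
depends on the restriction of the interpretation to U^ℓ(d). -/
def IsLocal (φ : FOForm NC NR) (x : ℕ) (ℓ : ℕ) : Prop :=
  ∀ (I : S5Interp NC NR) (w : I.W) (d : I.Δ)
    (η : ℕ → I.Δ) (θ : ℕ → (I.ballRestrict d ℓ).Δ),
    η x = d → (θ x).val = d →
    (FOForm.Sat I w η φ ↔ FOForm.Sat (I.ballRestrict d ℓ) w θ φ)

/-- φ (with single free variable x) is bisimulation invariant. -/
def BisimInvariant (φ : FOForm NC NR) (x : ℕ) : Prop :=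
  ∀ (I J : S5Interp NC NR) (w : I.W) (d : I.Δ) (v : J.W) (e : J.Δ),
    Bisimilar I J w d v e →
    ∀ (η : ℕ → I.Δ) (θ : ℕ → J.Δ), η x = d → θ x = e →
      (FOForm.Sat I w η φ ↔ FOForm.Sat J v θ φ)

/-- φ (with single free variable x) is bisimulation invariant over finite
S5-interpretations. -/
def BisimInvariantFin (φ : FOForm NC NR) (x : ℕ) : Prop :=
  ∀ (I J : S5Interp NC NR), Finite I.W → Finite I.Δ → Finite J.W → Finite J.Δ →
    ∀ (w : I.W) (d : I.Δ) (v : J.W) (e : J.Δ),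
    Bisimilar I J w d v e →
    ∀ (η : ℕ → I.Δ) (θ : ℕ → J.Δ), η x = d → θ x = e →
      (FOForm.Sat I w η φ ↔ FOForm.Sat J v θ φ)

/-- One step along some role at some world (the edge relation used in tree unravellings). -/
def roleStep (I : S5Interp NC NR) (a b : I.Δ) : Prop :=
  ∃ (r : NR) (w : I.W), (a, b) ∈ I.role r w

/-- Paths from d₀: a path (d₀,d₁,…,d_k) is encoded by its tail list (d₁,…,d_k). -/
def UPath (I : S5Interp NC NR) (d0 : I.Δ) : Type :=
  { l : List I.Δ // List.Chain (roleStep I) d0 l }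

/-- π : the last entry of a path. -/
def UPath.last {I : S5Interp NC NR} {d0 : I.Δ} (p : UPath I d0) : I.Δ :=
  (d0 :: p.val).getLast (by simp)

/-- The tree unravelling I*_{d₀}. -/
def S5Interp.unravel (I : S5Interp NC NR) (d0 : I.Δ) : S5Interp NC NR where
  W := I.W
  Δ := UPath I d0
  W_nonempty := I.W_nonempty
  Δ_nonempty := ⟨⟨[], List.Chain.nil⟩⟩
  conc A w := {p | p.last ∈ I.conc A w}
  role r w := {q | ∃ d, (q.1.last, d) ∈ I.role r w ∧ q.2.val = q.1.val ++ [d]}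

/-- Paths from d₀ of length at most ℓ. -/
def PPath (I : S5Interp NC NR) (d0 : I.Δ) (ℓ : ℕ) : Type :=
  { l : List I.Δ // List.Chain (roleStep I) d0 l ∧ l.length ≤ ℓ }

def PPath.last {I : S5Interp NC NR} {d0 : I.Δ} {ℓ : ℕ} (p : PPath I d0 ℓ) : I.Δ :=
  (d0 :: p.val).getLast (by simp)

/-- The map ρ of the partial unravelling: a surviving path goes to its last
entry, an element of the fresh copy of I to itself. -/
def punravelProj (I : S5Interp NC NR) (d0 : I.Δ) (ℓ : ℕ) :
    PPath I d0 ℓ ⊕ I.Δ → I.Δ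
  | Sum.inl p => p.last
  | Sum.inr d => d

/-- The partial unravelling of I at d₀ up to level ℓ: the tree unravelling
restricted to the radius-(ℓ+1) Gaifman neighbourhood of the root, with each
leaf path at distance ℓ+1 identified with its last entry in a fresh disjoint
copy of I. -/
def S5Interp.partialUnravel (I : S5Interp NC NR) (d0 : I.Δ) (ℓ : ℕ) :
    S5Interp NC NR where
  W := I.W
  Δ := PPath I d0 ℓ ⊕ I.Δ
  W_nonempty := I.W_nonempty
  Δ_nonempty := ⟨Sum.inl ⟨[], List.Chain.nil, Nat.zero_le _⟩⟩
  conc A w := {x | punravelProj I d0 ℓ x ∈ I.conc A w}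
  role r w := fun q =>
    match q with
    | (Sum.inl p, Sum.inl p') => ∃ d, (p.last, d) ∈ I.role r w ∧ p'.val = p.val ++ [d]
    | (Sum.inl p, Sum.inr d) => p.val.length = ℓ ∧ (p.last, d) ∈ I.role r w
    | (Sum.inr _, Sum.inl _) => False
    | (Sum.inr d, Sum.inr d') => (d, d') ∈ I.role r w

/-! Normal forms, over the finite signature N_C = {A_0,…,A_s}, N_R = {r_0,…,r_{t-1}}. -/

/-- Conjunction of a list of concepts (the empty conjunction is ⊤, encoded as
¬(A₀ ⊓ ¬A₀); it is never used since atom lists are nonempty). -/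
def bigConj (s t : ℕ) : List (DLConcept (Fin (s+1)) (Fin t)) → DLConcept (Fin (s+1)) (Fin t)
  | [] => .neg (.and (.atom 0) (.neg (.atom 0)))
  | [C] => C
  | C :: D :: L => .and C (bigConj s t (D :: L))

/-- Disjunction of a list of concepts (the empty disjunction is ⊥ = A₀ ⊓ ¬A₀). -/
def bigDisj (s t : ℕ) : List (DLConcept (Fin (s+1)) (Fin t)) → DLConcept (Fin (s+1)) (Fin t)
  | [] => .and (.atom 0) (.neg (.atom 0))
  | [C] => C
  | C :: D :: L => .neg (.and (.neg C) (.neg (bigDisj s t (D :: L))))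

/-- All lists obtained from a given list of atoms by choosing a sign
(nothing or negation) for each atom, in order. -/
def signedAll (s t : ℕ) :
    List (DLConcept (Fin (s+1)) (Fin t)) → List (List (DLConcept (Fin (s+1)) (Fin t)))
  | [] => [[]]
  | B :: L =>
      ((signedAll s t L).map (fun T => B :: T)) ++
      ((signedAll s t L).map (fun T => DLConcept.neg B :: T))

/-- The atoms of rank k, given the list of normal forms of rank k−1:
at_k = N_C ∪ {∃r.C | C ∈ nf_{k−1}} ∪ {◇C | C ∈ nf_{k−1}} (in a fixed order). -/
def atomsOf (s t : ℕ) (prev : List (DLConcept (Fin (s+1)) (Fin t))) :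
    List (DLConcept (Fin (s+1)) (Fin t)) :=
  ((List.finRange (s+1)).map DLConcept.atom)
    ++ ((List.finRange t).flatMap (fun r => prev.map (DLConcept.ex r)))
    ++ (prev.map DLConcept.dia)

/-- The normal forms of rank k (as a list enumerating the set nf_k in a fixed
order): all signed conjunctions over the atoms of rank k, where nf_{−1} = ∅. -/
def nfList (s t : ℕ) : ℕ → List (DLConcept (Fin (s+1)) (Fin t))
  | 0 => (signedAll s t (atomsOf s t [])).map (bigConj s t)
  | k+1 => (signedAll s t (atomsOf s t (nfList s t k))).map (bigConj s t)

/-! The two-sorted correspondence language SL. -/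

/-- Formulas of the two-sorted first-order language SL (domain variables and
world variables are natural numbers; each predicate takes one extra
world-sort argument). -/
inductive SLForm (NC NR : Type) : Type where
  | conc : NC → ℕ → ℕ → SLForm NC NR        -- A(x, v)
  | role : NR → ℕ → ℕ → ℕ → SLForm NC NR    -- r(x, y, v)
  | eqD  : ℕ → ℕ → SLForm NC NR             -- x = y (domain sort)
  | eqW  : ℕ → ℕ → SLForm NC NR             -- v = u (world sort)
  | neg  : SLForm NC NR → SLForm NC NR
  | and  : SLForm NC NR → SLForm NC NR → SLForm NC NR
  | exD  : ℕ → SLForm NC NR → SLForm NC NR  -- ∃x (domain sort)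
  | exW  : ℕ → SLForm NC NR → SLForm NC NR  -- ∃v (world sort)

/-- Satisfaction for SL over S5-interpretations, with a domain valuation η and
a world valuation ξ. -/
def SLForm.Sat (I : S5Interp NC NR) : (ℕ → I.Δ) → (ℕ → I.W) → SLForm NC NR → Prop
  | η, ξ, .conc A x v   => η x ∈ I.conc A (ξ v)
  | η, ξ, .role r x y v => (η x, η y) ∈ I.role r (ξ v)
  | η, _, .eqD x y      => η x = η y
  | _, ξ, .eqW v u      => ξ v = ξ u
  | η, ξ, .neg φ        => ¬ SLForm.Sat I η ξ φ
  | η, ξ, .and φ ψ      => SLForm.Sat I η ξ φ ∧ SLForm.Sat I η ξ ψ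
  | η, ξ, .exD x φ      => ∃ d, SLForm.Sat I (Function.update η x d) ξ φ
  | η, ξ, .exW v φ      => ∃ u, SLForm.Sat I η (Function.update ξ v u) φ

/-- Free domain-sort variables of an SL formula. -/
def SLForm.freeDVars : SLForm NC NR → Set ℕ
  | .conc _ x _   => {x}
  | .role _ x y _ => {x, y}
  | .eqD x y      => {x, y}
  | .eqW _ _      => ∅
  | .neg φ        => φ.freeDVars
  | .and φ ψ      => φ.freeDVars ∪ ψ.freeDVars
  | .exD x φ      => φ.freeDVars \ {x}
  | .exW _ φ      => φ.freeDVars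

/-- Free world-sort variables of an SL formula. -/
def SLForm.freeWVars : SLForm NC NR → Set ℕ
  | .conc _ _ v   => {v}
  | .role _ _ _ v => {v}
  | .eqD _ _      => ∅
  | .eqW v u      => {v, u}
  | .neg φ        => φ.freeWVars
  | .and φ ψ      => φ.freeWVars ∪ ψ.freeWVars
  | .exD _ φ      => φ.freeWVars
  | .exW v φ      => φ.freeWVars \ {v}

/-- The translation (−)^{†_v} of S5_FOL into SL: predicates get the world
variable v as extra argument, and □ becomes universal quantification over v. -/
def dagger (v : ℕ) : FOForm NC NR → SLForm NC NR
  | .conc A x   => .conc A x v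
  | .role r x y => .role r x y v
  | .eq x y     => .eqD x y
  | .neg φ      => .neg (dagger v φ)
  | .and φ ψ    => .and (dagger v φ) (dagger v ψ)
  | .ex x φ     => .exD x (dagger v φ)
  | .box φ      => .neg (.exW v (.neg (dagger v φ)))

lemma chain_snoc_aux {α : Type} (R : α → α → Prop) (l : List α) (a b : α)
    (h : List.Chain R a l) (hb : R ((a :: l).getLast (by simp)) b) :
    List.Chain R a (l ++ [b]) := by
  induction l generalizing a with
  | nil => exact List.Chain.cons (by simpa using hb) List.Chain.nil
  | cons c l ih =>
    cases h with
    | cons_cons h1 h2 =>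
      exact List.Chain.cons h1 (ih c h2 (by simpa using hb))

lemma PPath.last_of_eq_snoc {I : S5Interp NC NR} {d0 : I.Δ} {ℓ : ℕ} (p : PPath I d0 ℓ)
    (l : List I.Δ) (d : I.Δ) (h : p.val = l ++ [d]) : p.last = d := by
  simp [PPath.last, h]

/-- the partial unravelling of I at d₀ up to level ℓ is
bisimilar to I via the map ρ sending each surviving path to its last entry and
each element of the fresh copy of I to itself (identity on worlds); moreover it
is finite whenever I is finite. -/
theorem partialUnravel_bisim (NC NR : Type) (I : S5Interp NC NR)
    (d0 : I.Δ) (ℓ : ℕ) (w0 : I.W) :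
    IsBisimulation (I.partialUnravel d0 ℓ) I
      (fun a b => a.1 = b.1 ∧ punravelProj I d0 ℓ a.2 = b.2) ∧
    Bisimilar (I.partialUnravel d0 ℓ) I w0
      (Sum.inl (⟨[], List.Chain.nil, Nat.zero_le ℓ⟩ : PPath I d0 ℓ)) w0 d0 ∧
    (Finite I.W → Finite I.Δ →
      Finite (I.partialUnravel d0 ℓ).W ∧ Finite (I.partialUnravel d0 ℓ).Δ) := by
  have key : IsBisimulation (I.partialUnravel d0 ℓ) I
      (fun a b => a.1 = b.1 ∧ punravelProj I d0 ℓ a.2 = b.2) := by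
    rintro w d v e ⟨hw, he⟩
    change w = v at hw
    change punravelProj I d0 ℓ d = e at he
    subst hw
    subst he
    refine ⟨fun A => Iff.rfl, fun w' => ⟨w', rfl, rfl⟩, fun w' => ⟨w', rfl, rfl⟩, ?_, ?_⟩
    · intro r d' h
      refine ⟨punravelProj I d0 ℓ d', ?_, rfl, rfl⟩
      rcases d with p | d <;> rcases d' with p' | d'
      · obtain ⟨x, hx, hp⟩ := h
        have := p'.last_of_eq_snoc _ _ hp
        change (p.last, p'.last) ∈ I.role r w
        rw [this]
        exact hx
      · exact h.2
      · exact h.elim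
      · exact h
    · intro r e' h
      rcases d with p | d
      · by_cases hl : p.val.length = ℓ
        · exact ⟨Sum.inr e', ⟨hl, h⟩, rfl, rfl⟩
        · have hle := p.2.2
          let p' : PPath I d0 ℓ := ⟨p.val ++ [e'],
            chain_snoc_aux _ _ _ _ p.2.1 ⟨r, w, h⟩, by simp; omega⟩
          exact ⟨Sum.inl p', ⟨e', h, rfl⟩, rfl, p'.last_of_eq_snoc _ _ rfl⟩
      · exact ⟨Sum.inr e', h, rfl, rfl⟩
  refine ⟨key, ⟨_, key, rfl, rfl⟩, fun hW hD => ⟨hW, ?_⟩⟩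
  have h1 : Finite (PPath I d0 ℓ) := by
    have h2 : Finite {l : List I.Δ // l.length ≤ ℓ} := (List.finite_length_le I.Δ ℓ).to_subtype
    refine Finite.of_injective
      (fun p : PPath I d0 ℓ => (⟨p.val, p.2.2⟩ : {l : List I.Δ // l.length ≤ ℓ})) ?_
    intro p q h
    have h3 : p.val = q.val := (Subtype.mk.injEq _ _ _ _).mp h
    exact Subtype.ext h3
  change Finite (PPath I d0 ℓ ⊕ I.Δ)
  infer_instance
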